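/- arXiv:1608.08301 — 2 statements merged into one kernel-verified Lean document; each statement's English description precedes it below -/
import Mathlib

section
/- (Quadratic mollification commutator estimate.) Let η ∈ C^∞(ℝⁿ) satisfy ∫_{ℝⁿ} η(h) dh = 1 and suppose that (1 + |h|²) ∇^b η(h) ∈ L¹(ℝⁿ) for every multi-index b, and set η_ε(h) := ε^{−n} η(h/ε) for ε > 0. Then for every multi-index a there is a constant C_{|a|} such that for all bounded f, g ∈ C¹(ℝⁿ) with bounded gradients, ‖∇^a (η_ε ∗ (f g) − (η_ε ∗ f)(η_ε ∗ g))‖_{C⁰(ℝⁿ)} ≤ C_{|a|} ε^{2−|a|} ‖∇f‖_{C⁰(ℝⁿ)} ‖∇g‖_{C⁰(ℝⁿ)}. -/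
/-!
Fix a point `x` and write `k = η_ε`. Because `∫ k = 1`, the commutator `k ∗ (fg) − (k ∗ f)(k ∗ g)`
does not change when constants are subtracted from `f` and `g`, so `f` and `g` may be assumed to
vanish at `x`; then `|f (x − h)| ≤ A‖h‖` and `|g (x − h)| ≤ B‖h‖`.

All derivatives can be moved onto the kernel, `∇^b (k ∗ f) = (∇^b k) ∗ f`. The derivatives of `k`
are only known to be integrable, so difference quotients of `k` cannot be dominated; instead each
derivative is first put on `f`, where domination is possible, and then moved to `k` by integration
by parts.

By scaling, `∫ ‖h‖^j |∇^b k| = ε^{j − |b|} ∫ ‖h‖^j |∇^b η|`. Hence `∇^a (k ∗ (fg))` at `x` is of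
order `ε^{2 − |a|} A B`, while `∇^b (k ∗ f)` and `∇^b (k ∗ g)` at `x` are of order `ε^{1 − |b|} A`
and `ε^{1 − |b|} B`, so that by the Leibniz rule `∇^a ((k ∗ f)(k ∗ g))` at `x` is of order
`ε^{2 − |a|} A B` too.
-/

open MeasureTheory

noncomputable section

abbrev Vn (n : ℕ) : Type := Fin n → ℝ

/-- spatial partial derivative in direction `i` -/
def sder {n : ℕ} (i : Fin n) (f : Vn n → ℝ) : Vn n → ℝ :=
  fun x => fderiv ℝ f x (Pi.single i 1)

/-- iterated partial derivative along a multi-index (a list of directions) -/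
def sderM {n : ℕ} : List (Fin n) → (Vn n → ℝ) → Vn n → ℝ
  | [], f => f
  | i :: a, f => sder i (sderM a f)

/-- convolution `k ∗ f` on `ℝⁿ` -/
def conv {n : ℕ} (k f : Vn n → ℝ) : Vn n → ℝ := fun x => ∫ h, k h * f (x - h)

/-- rescaled mollifier `η_ε(h) = ε^{−n} η(h/ε)` -/
def moll {n : ℕ} (η : Vn n → ℝ) (ε : ℝ) : Vn n → ℝ :=
  fun h => (ε ^ n)⁻¹ * η (ε⁻¹ • h)

open Asymptotics

/-! ### Functions of quadratic growth -/

section Growth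

variable {E F : Type*} [NormedAddCommGroup E]

lemma one_add_norm_sub_sq_le (x h : E) :
    1 + ‖x - h‖ ^ 2 ≤ 2 * (1 + ‖x‖ ^ 2) * (1 + ‖h‖ ^ 2) := by
  have hsq : ‖x - h‖ ^ 2 ≤ (‖x‖ + ‖h‖) ^ 2 := by gcongr; exact norm_sub_le x h
  nlinarith [sq_nonneg (‖x‖ - ‖h‖), mul_nonneg (sq_nonneg ‖x‖) (sq_nonneg ‖h‖)]

lemma isBigO_one_add_norm_mul_self :
    (fun x : E => (1 + ‖x‖) * (1 + ‖x‖)) =O[⊤] fun x => 1 + ‖x‖ ^ 2 := by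
  refine isBigO_top.2 ⟨2, fun x => ?_⟩
  rw [Real.norm_of_nonneg (by positivity), Real.norm_of_nonneg (by positivity)]
  nlinarith [sq_nonneg (‖x‖ - 1)]

lemma integrable_of_integrable_one_add_norm_sq_mul [MeasurableSpace E] [OpensMeasurableSpace E]
    {μ : Measure E} {k : E → ℝ} (hk : Integrable (fun h => (1 + ‖h‖ ^ 2) * k h) μ) :
    Integrable k μ := by
  have hpos (h : E) : (0 : ℝ) < 1 + ‖h‖ ^ 2 := by positivity
  have hweight : Continuous fun h : E => (1 + ‖h‖ ^ 2)⁻¹ :=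
    (by fun_prop : Continuous fun h : E => 1 + ‖h‖ ^ 2).inv₀ fun h => (hpos h).ne'
  have hbdd (h : E) : ‖(1 + ‖h‖ ^ 2)⁻¹‖ ≤ 1 := by
    rw [Real.norm_of_nonneg (inv_nonneg.2 (hpos h).le)]
    exact inv_le_one_of_one_le₀ (le_add_of_nonneg_right (by positivity))
  simpa [(hpos _).ne'] using hk.bdd_mul hweight.aestronglyMeasurable (ae_of_all μ hbdd)

lemma integrable_norm_pow_mul_abs [MeasurableSpace E] [OpensMeasurableSpace E]
    {μ : Measure E} {k : E → ℝ} (hk : Integrable (fun h => (1 + ‖h‖ ^ 2) * k h) μ) {j : ℕ}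
    (hj : j ≤ 2) : Integrable (fun h => ‖h‖ ^ j * |k h|) μ := by
  have hmeas : AEStronglyMeasurable (fun h => ‖h‖ ^ j * |k h|) μ :=
    (by fun_prop : Continuous fun h : E => ‖h‖ ^ j).aestronglyMeasurable.mul
      (integrable_of_integrable_one_add_norm_sq_mul hk).abs.aestronglyMeasurable
  refine hk.mono hmeas (ae_of_all _ fun h => ?_)
  have hpow : ‖h‖ ^ j ≤ 1 + ‖h‖ ^ 2 := by
    interval_cases j <;> nlinarith [sq_nonneg ‖h‖, sq_nonneg (‖h‖ - 1)]
  rw [norm_mul, norm_mul, Real.norm_of_nonneg (by positivity : 0 ≤ ‖h‖ ^ j),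
    Real.norm_of_nonneg (by positivity : 0 ≤ 1 + ‖h‖ ^ 2), Real.norm_eq_abs |k h|, abs_abs,
    Real.norm_eq_abs]
  gcongr

variable [NormedAddCommGroup F] [NormedSpace ℝ F]

lemma norm_smul_comp_sub_le {u : E → F} {C : ℝ} (hu : ∀ x, ‖u x‖ ≤ C * (1 + ‖x‖ ^ 2))
    (k : E → ℝ) (x h : E) :
    ‖k h • u (x - h)‖ ≤ 2 * C * (1 + ‖x‖ ^ 2) * ‖(1 + ‖h‖ ^ 2) * k h‖ := by
  have hC : 0 ≤ C := nonneg_of_mul_nonneg_left ((norm_nonneg _).trans (hu 0)) (by positivity)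
  calc ‖k h • u (x - h)‖ ≤ ‖k h‖ * (C * (2 * (1 + ‖x‖ ^ 2) * (1 + ‖h‖ ^ 2))) := by
        rw [norm_smul]
        gcongr
        exact (hu _).trans (by gcongr; exact one_add_norm_sub_sq_le x h)
    _ = 2 * C * (1 + ‖x‖ ^ 2) * ‖(1 + ‖h‖ ^ 2) * k h‖ := by
        rw [norm_mul, Real.norm_of_nonneg (by positivity : (0 : ℝ) ≤ 1 + ‖h‖ ^ 2)]
        ring

lemma integrable_smul_comp_sub [MeasurableSpace E] [BorelSpace E] [SecondCountableTopology E]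
    {μ : Measure E} {k : E → ℝ} (hk : Integrable (fun h => (1 + ‖h‖ ^ 2) * k h) μ)
    {u : E → F} (hcont : Continuous u) (hu : u =O[⊤] fun x => 1 + ‖x‖ ^ 2) (x : E) :
    Integrable (fun h => k h • u (x - h)) μ := by
  obtain ⟨C, hC⟩ := isBigO_top.1 hu
  simp only [Real.norm_of_nonneg (by positivity : (0 : ℝ) ≤ 1 + ‖_‖ ^ 2)] at hC
  have hmeas : AEStronglyMeasurable (fun h => k h • u (x - h)) μ :=
    (integrable_of_integrable_one_add_norm_sq_mul hk).aestronglyMeasurable.smul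
      (by fun_prop : Continuous fun h => u (x - h)).aestronglyMeasurable
  exact (hk.norm.const_mul _).mono' hmeas (ae_of_all μ (norm_smul_comp_sub_le hC k x))

variable [NormedSpace ℝ E]

/-- The class of functions that will be convolved with a kernel having second moments: `C¹`
functions which, together with their derivative, grow at most quadratically. It contains the
products of two Lipschitz `C¹` functions. -/
structure HasQuadraticGrowth (f : E → ℝ) : Prop where
  contDiff : ContDiff ℝ 1 f
  isBigO : f =O[⊤] fun x => 1 + ‖x‖ ^ 2
  isBigO_fderiv : fderiv ℝ f =O[⊤] fun x => 1 + ‖x‖ ^ 2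

lemma norm_sub_le_of_norm_fderiv_le {f : E → F} (hf : Differentiable ℝ f) {A : ℝ}
    (hA : ∀ x, ‖fderiv ℝ f x‖ ≤ A) (x y : E) : ‖f y - f x‖ ≤ A * ‖y - x‖ :=
  convex_univ.norm_image_sub_le_of_norm_fderiv_le (fun z _ => hf z) (fun z _ => hA z)
    (Set.mem_univ x) (Set.mem_univ y)

lemma isBigO_one_add_norm_of_norm_fderiv_le {f : E → F} (hf : Differentiable ℝ f) {A : ℝ}
    (hA : ∀ x, ‖fderiv ℝ f x‖ ≤ A) : f =O[⊤] fun x => 1 + ‖x‖ := by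
  refine isBigO_top.2 ⟨‖f 0‖ + A, fun x => ?_⟩
  have hA0 : 0 ≤ A := (norm_nonneg _).trans (hA 0)
  have hx : ‖f x - f 0‖ ≤ A * ‖x‖ := by simpa using norm_sub_le_of_norm_fderiv_le hf hA 0 x
  rw [Real.norm_of_nonneg (by positivity)]
  calc ‖f x‖ ≤ ‖f 0‖ + ‖f x - f 0‖ := norm_le_norm_add_norm_sub' _ _
    _ ≤ (‖f 0‖ + A) * (1 + ‖x‖) := by nlinarith [mul_nonneg (norm_nonneg (f 0)) (norm_nonneg x)]

lemma isBigO_one_add_norm_fderiv {f : E → F} {A : ℝ} (hA : ∀ x, ‖fderiv ℝ f x‖ ≤ A) :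
    fderiv ℝ f =O[⊤] fun x => 1 + ‖x‖ := by
  refine isBigO_top.2 ⟨A, fun x => (hA x).trans ?_⟩
  rw [Real.norm_of_nonneg (by positivity)]
  exact le_mul_of_one_le_right ((norm_nonneg _).trans (hA x)) (by simp)

lemma HasQuadraticGrowth.mul_of_norm_fderiv_le {f g : E → ℝ} (hf : ContDiff ℝ 1 f)
    (hg : ContDiff ℝ 1 g) {A B : ℝ} (hA : ∀ x, ‖fderiv ℝ f x‖ ≤ A)
    (hB : ∀ x, ‖fderiv ℝ g x‖ ≤ B) : HasQuadraticGrowth fun x => f x * g x where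
  contDiff := hf.mul hg
  isBigO :=
    ((isBigO_one_add_norm_of_norm_fderiv_le (hf.differentiable one_ne_zero) hA).mul
      (isBigO_one_add_norm_of_norm_fderiv_le (hg.differentiable one_ne_zero) hB)).trans
      isBigO_one_add_norm_mul_self
  isBigO_fderiv := by
    have hfd := hf.differentiable one_ne_zero
    have hgd := hg.differentiable one_ne_zero
    have hfderiv : fderiv ℝ (fun x => f x * g x) =
        fun x => f x • fderiv ℝ g x + g x • fderiv ℝ f x :=
      funext fun x => fderiv_fun_mul (hfd x) (hgd x)
    rw [hfderiv]
    exact (((isBigO_one_add_norm_of_norm_fderiv_le hfd hA).smul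
      (isBigO_one_add_norm_fderiv hB)).add
      ((isBigO_one_add_norm_of_norm_fderiv_le hgd hB).smul
      (isBigO_one_add_norm_fderiv hA))).trans isBigO_one_add_norm_mul_self

lemma HasQuadraticGrowth.of_norm_fderiv_le {f : E → ℝ} (hf : ContDiff ℝ 1 f) {A : ℝ}
    (hA : ∀ x, ‖fderiv ℝ f x‖ ≤ A) : HasQuadraticGrowth f := by
  simpa using mul_of_norm_fderiv_le hf (contDiff_const (c := (1 : ℝ))) hA (B := 0) (by simp)

end Growth

variable {n : ℕ}

/-! ### Iterated partial derivatives -/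

lemma sderM_append_singleton (a : List (Fin n)) (i : Fin n) (f : Vn n → ℝ) :
    sderM (a ++ [i]) f = sderM a (sder i f) := by
  induction a with
  | nil => rfl
  | cons j a ih => rw [List.cons_append, sderM, ih, sderM]

lemma contDiff_sder {m : WithTop ℕ∞} {U : Vn n → ℝ} (hU : ContDiff ℝ (m + 1) U) (i : Fin n) :
    ContDiff ℝ m (sder i U) :=
  (hU.fderiv_right le_rfl).clm_apply contDiff_const

lemma contDiff_succ_of_contDiff_sder {m : ℕ} {U : Vn n → ℝ} (hU : Differentiable ℝ U)
    (hsder : ∀ i, ContDiff ℝ m (sder i U)) : ContDiff ℝ (m + 1) U := by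
  refine contDiff_succ_iff_fderiv_apply.2 ⟨hU, by simp, fun v => ?_⟩
  have hsum : (fun x => fderiv ℝ U x v) = fun x => ∑ i, v i * sder i U x := by
    funext x
    simpa [sder] using congrArg (fderiv ℝ U x) (pi_eq_sum_univ' v)
  rw [hsum]
  exact ContDiff.sum fun i _ => contDiff_const.mul (hsder i)

lemma sder_add (i : Fin n) {U V : Vn n → ℝ} (hU : Differentiable ℝ U) (hV : Differentiable ℝ V) :
    sder i (fun y => U y + V y) = fun y => sder i U y + sder i V y :=
  funext fun y => by simp [sder, fderiv_fun_add (hU y) (hV y)]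

lemma sder_sub (i : Fin n) {U V : Vn n → ℝ} (hU : Differentiable ℝ U) (hV : Differentiable ℝ V) :
    sder i (fun y => U y - V y) = fun y => sder i U y - sder i V y :=
  funext fun y => by simp [sder, fderiv_fun_sub (hU y) (hV y)]

lemma sder_mul (i : Fin n) {U V : Vn n → ℝ} (hU : Differentiable ℝ U) (hV : Differentiable ℝ V) :
    sder i (fun y => U y * V y) = fun y => sder i U y * V y + U y * sder i V y :=
  funext fun y => by
    simp only [sder, fderiv_fun_mul (hU y) (hV y), add_apply, smul_apply, smul_eq_mul]
    ring

lemma sderM_add (a : List (Fin n)) {U V : Vn n → ℝ} (hU : ContDiff ℝ a.length U)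
    (hV : ContDiff ℝ a.length V) :
    sderM a (fun y => U y + V y) = fun y => sderM a U y + sderM a V y := by
  induction a using List.reverseRecOn generalizing U V with
  | nil => rfl
  | append_singleton a i ih =>
    simp only [List.length_append, List.length_singleton, Nat.cast_add, Nat.cast_one] at hU hV
    simp only [sderM_append_singleton]
    rw [sder_add i (hU.differentiable (by simp)) (hV.differentiable (by simp)),
      ih (contDiff_sder hU i) (contDiff_sder hV i)]

lemma sderM_sub (a : List (Fin n)) {U V : Vn n → ℝ} (hU : ContDiff ℝ a.length U)
    (hV : ContDiff ℝ a.length V) :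
    sderM a (fun y => U y - V y) = fun y => sderM a U y - sderM a V y := by
  induction a using List.reverseRecOn generalizing U V with
  | nil => rfl
  | append_singleton a i ih =>
    simp only [List.length_append, List.length_singleton, Nat.cast_add, Nat.cast_one] at hU hV
    simp only [sderM_append_singleton]
    rw [sder_sub i (hU.differentiable (by simp)) (hV.differentiable (by simp)),
      ih (contDiff_sder hU i) (contDiff_sder hV i)]

-- The Leibniz rule has `2 ^ |a|` terms, each of size at most `K * L * r ^ |a|`.
lemma abs_sderM_mul_le (a : List (Fin n)) {U V : Vn n → ℝ} (hU : ContDiff ℝ a.length U)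
    (hV : ContDiff ℝ a.length V) {x : Vn n} {K L r : ℝ}
    (hK : ∀ b : List (Fin n), b.length ≤ a.length → |sderM b U x| ≤ K * r ^ b.length)
    (hL : ∀ b : List (Fin n), b.length ≤ a.length → |sderM b V x| ≤ L * r ^ b.length) :
    |sderM a (fun y => U y * V y) x| ≤ K * L * (2 * r) ^ a.length := by
  induction a using List.reverseRecOn generalizing U V K L with
  | nil =>
    have hU0 : |U x| ≤ K := by simpa [sderM] using hK [] le_rfl
    have hV0 : |V x| ≤ L := by simpa [sderM] using hL [] le_rfl
    simpa [sderM, abs_mul] using mul_le_mul hU0 hV0 (abs_nonneg _) ((abs_nonneg _).trans hU0)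
  | append_singleton a i ih =>
    simp only [List.length_append, List.length_singleton, Nat.cast_add, Nat.cast_one]
      at hU hV hK hL ⊢
    have hUa : ContDiff ℝ a.length U := hU.of_le le_self_add
    have hVa : ContDiff ℝ a.length V := hV.of_le le_self_add
    have hsder {W : Vn n → ℝ} {M : ℝ}
        (hW : ∀ b : List (Fin n), b.length ≤ a.length + 1 → |sderM b W x| ≤ M * r ^ b.length)
        (b : List (Fin n)) (hb : b.length ≤ a.length) :
        |sderM b (sder i W) x| ≤ M * r * r ^ b.length := by
      simpa [sderM_append_singleton, pow_succ', mul_assoc] using hW (b ++ [i]) (by simpa using hb)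
    have hleft := ih (contDiff_sder hU i) hVa (hsder hK) fun b hb => hL b (by lia)
    have hright := ih hUa (contDiff_sder hV i) (fun b hb => hK b (by lia)) (hsder hL)
    rw [sderM_append_singleton, sder_mul i (hU.differentiable (by simp))
      (hV.differentiable (by simp)), sderM_add a ((contDiff_sder hU i).mul hVa)
      (hUa.mul (contDiff_sder hV i))]
    calc _ ≤ K * r * L * (2 * r) ^ a.length + K * (L * r) * (2 * r) ^ a.length :=
          (abs_add_le _ _).trans (add_le_add hleft hright)
      _ = K * L * (2 * r) ^ (a.length + 1) := by ring

/-! ### Convolution with kernels having second moments -/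

/-- A `C^N` kernel all of whose partial derivatives of order at most `N` are integrable against
`1 + ‖h‖²`. -/
structure HasSecondMoments (N : ℕ) (k : Vn n → ℝ) : Prop where
  contDiff : ContDiff ℝ N k
  integrable_weighted : ∀ b : List (Fin n), b.length ≤ N →
    Integrable fun h : Vn n => (1 + ‖h‖ ^ 2) * sderM b k h

namespace HasSecondMoments

variable {M N : ℕ} {k f : Vn n → ℝ}

lemma mono (hk : HasSecondMoments N k) (hMN : M ≤ N) : HasSecondMoments M k where
  contDiff := hk.contDiff.of_le (by exact_mod_cast hMN)
  integrable_weighted b hb := hk.integrable_weighted b (hb.trans hMN)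

protected lemma sder (hk : HasSecondMoments (N + 1) k) (i : Fin n) :
    HasSecondMoments N (sder i k) where
  contDiff := contDiff_sder (by exact_mod_cast hk.contDiff) i
  integrable_weighted b hb := by
    simpa only [sderM_append_singleton] using
      hk.integrable_weighted (b ++ [i]) (by simpa using hb)

lemma integrable (hk : HasSecondMoments N k) : Integrable k :=
  integrable_of_integrable_one_add_norm_sq_mul (hk.integrable_weighted [] (Nat.zero_le N))

lemma integrable_mul_comp_sub (hk : HasSecondMoments N k) (hf : HasQuadraticGrowth f)
    (x : Vn n) : Integrable fun h => k h * f (x - h) :=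
  integrable_smul_comp_sub (hk.integrable_weighted [] (Nat.zero_le N)) hf.contDiff.continuous
    hf.isBigO x

lemma integrable_smul_fderiv_comp_sub (hk : HasSecondMoments N k) (hf : HasQuadraticGrowth f)
    (x : Vn n) : Integrable fun h => k h • fderiv ℝ f (x - h) :=
  integrable_smul_comp_sub (hk.integrable_weighted [] (Nat.zero_le N))
    (hf.contDiff.continuous_fderiv one_ne_zero) hf.isBigO_fderiv x

lemma hasFDerivAt_conv (hk : HasSecondMoments N k) (hf : HasQuadraticGrowth f) (x : Vn n) :
    HasFDerivAt (conv k f) (∫ h, k h • fderiv ℝ f (x - h)) x := by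
  obtain ⟨C, hC⟩ := isBigO_top.1 hf.isBigO_fderiv
  simp only [Real.norm_of_nonneg (by positivity : (0 : ℝ) ≤ 1 + ‖_‖ ^ 2)] at hC
  have hC0 : 0 ≤ C := nonneg_of_mul_nonneg_left ((norm_nonneg _).trans (hC 0)) (by positivity)
  have hbound (h y : Vn n) (hy : y ∈ Metric.ball x 1) :
      ‖k h • fderiv ℝ f (y - h)‖ ≤
        2 * C * (1 + (1 + ‖x‖) ^ 2) * ‖(1 + ‖h‖ ^ 2) * k h‖ := by
    have hyx : ‖y‖ ≤ 1 + ‖x‖ := by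
      linarith [norm_le_norm_add_norm_sub' y x, mem_ball_iff_norm.1 hy]
    exact (norm_smul_comp_sub_le hC k y h).trans (by gcongr)
  have hderiv (h y : Vn n) :
      HasFDerivAt (fun y => k h * f (y - h)) (k h • fderiv ℝ f (y - h)) y := by
    have hfy := (hf.contDiff.differentiable one_ne_zero (y - h)).hasFDerivAt
    exact ((hasFDerivAt_comp_sub h).2 hfy).const_mul (k h)
  exact hasFDerivAt_integral_of_dominated_of_fderiv_le (Metric.ball_mem_nhds x one_pos)
    (.of_forall fun y => (hk.integrable_mul_comp_sub hf y).aestronglyMeasurable)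
    (hk.integrable_mul_comp_sub hf x)
    (hk.integrable_smul_fderiv_comp_sub hf x).aestronglyMeasurable
    (ae_of_all _ hbound) ((hk.integrable_weighted [] (Nat.zero_le N)).norm.const_mul _)
    (ae_of_all _ fun h y _ => hderiv h y)

lemma differentiable_conv (hk : HasSecondMoments N k) (hf : HasQuadraticGrowth f) :
    Differentiable ℝ (conv k f) :=
  fun x => (hk.hasFDerivAt_conv hf x).differentiableAt

lemma sder_conv (hk : HasSecondMoments 1 k) (hf : HasQuadraticGrowth f) (i : Fin n) :
    sder i (conv k f) = conv (sder i k) f := by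
  funext x
  have hfd : Differentiable ℝ f := hf.contDiff.differentiable one_ne_zero
  have hreflect (h : Vn n) : fderiv ℝ (fun h => f (x - h)) h = -fderiv ℝ f (x - h) := by
    have hfh := (hfd (x - h)).hasFDerivAt.comp h ((hasFDerivAt_id h).const_sub x)
    simpa [Function.comp_def] using hfh.fderiv
  have hderiv_f : sder i (conv k f) x =
      ∫ h, k h * fderiv ℝ f (x - h) (Pi.single i 1) := by
    rw [sder, (hk.hasFDerivAt_conv hf x).fderiv,
      ContinuousLinearMap.integral_apply (hk.integrable_smul_fderiv_comp_sub hf x)]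
    rfl
  have hint : Integrable fun h => k h * fderiv ℝ f (x - h) (Pi.single i 1) :=
    (hk.integrable_smul_fderiv_comp_sub hf x).apply_continuousLinearMap (Pi.single i 1)
  have hparts := integral_mul_fderiv_eq_neg_fderiv_mul_of_integrable (μ := volume)
    (f := k) (g := fun h => f (x - h)) (v := Pi.single i (1 : ℝ))
    ((hk.sder i).integrable_mul_comp_sub hf x) (by simpa [hreflect] using hint.neg)
    (hk.integrable_mul_comp_sub hf x)
    (fun h _ => hk.contDiff.differentiable (by simp) h) (fun h _ => by fun_prop)
  simp only [hreflect, neg_apply, mul_neg, integral_neg, neg_inj] at hparts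
  rw [hderiv_f, hparts]
  rfl

lemma contDiff_conv (hk : HasSecondMoments N k) (hf : HasQuadraticGrowth f) :
    ContDiff ℝ N (conv k f) := by
  induction N generalizing k with
  | zero => exact contDiff_zero.2 (hk.differentiable_conv hf).continuous
  | succ N ih =>
    refine contDiff_succ_of_contDiff_sder (hk.differentiable_conv hf) fun i => ?_
    rw [(hk.mono (Nat.le_add_left 1 N)).sder_conv hf]
    exact ih (hk.sder i)

lemma sderM_conv {a : List (Fin n)} (hk : HasSecondMoments a.length k)
    (hf : HasQuadraticGrowth f) : sderM a (conv k f) = conv (sderM a k) f := by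
  induction a using List.reverseRecOn generalizing k with
  | nil => rfl
  | append_singleton a i ih =>
    rw [List.length_append, List.length_singleton] at hk
    rw [sderM_append_singleton, sderM_append_singleton,
      (hk.mono (Nat.le_add_left 1 _)).sder_conv hf, ih (hk.sder i)]

end HasSecondMoments

/-! ### Moments and scaling -/

/-- The absolute moment of order `j` of `u`. -/
def absMoment (j : ℕ) (u : Vn n → ℝ) : ℝ := ∫ h, ‖h‖ ^ j * |u h|

lemma abs_conv_le_mul_absMoment {k f : Vn n → ℝ} {j : ℕ}
    (hk : Integrable fun h => ‖h‖ ^ j * |k h|) {A : ℝ} {x : Vn n}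
    (hf : ∀ h, |f (x - h)| ≤ A * ‖h‖ ^ j) : |conv k f x| ≤ A * absMoment j k := by
  rw [absMoment, ← integral_const_mul]
  refine norm_integral_le_of_norm_le (f := fun h => k h * f (x - h)) (hk.const_mul A)
    (ae_of_all _ fun h => ?_)
  calc ‖k h * f (x - h)‖ = |k h| * |f (x - h)| := norm_mul _ _
    _ ≤ |k h| * (A * ‖h‖ ^ j) := by gcongr; exact hf h
    _ = A * (‖h‖ ^ j * |k h|) := by ring

lemma HasSecondMoments.integrable_norm_pow_mul_abs_sderM {N : ℕ} {k : Vn n → ℝ}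
    (hk : HasSecondMoments N k) {b : List (Fin n)} (hb : b.length ≤ N) {j : ℕ} (hj : j ≤ 2) :
    Integrable fun h => ‖h‖ ^ j * |sderM b k h| :=
  integrable_norm_pow_mul_abs (hk.integrable_weighted b hb) hj

lemma exists_absMoment_sderM_le (N : ℕ) (k : Vn n → ℝ) :
    ∃ M, 0 ≤ M ∧ ∀ b : List (Fin n), b.length ≤ N → ∀ j ≤ 2, absMoment j (sderM b k) ≤ M := by
  have hfinite : ({b : List (Fin n) | b.length ≤ N} ×ˢ Set.Iic 2).Finite :=
    (List.finite_length_le (Fin n) N).prod (Set.finite_Iic 2)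
  obtain ⟨M, hM⟩ :=
    (hfinite.image fun p : List (Fin n) × ℕ => absMoment p.2 (sderM p.1 k)).bddAbove
  have hle (b : List (Fin n)) (hb : b.length ≤ N) (j : ℕ) (hj : j ≤ 2) :
      absMoment j (sderM b k) ≤ M := hM ⟨(b, j), ⟨hb, hj⟩, rfl⟩
  have hnonneg : 0 ≤ absMoment 0 k := integral_nonneg fun h => by positivity
  exact ⟨M, hnonneg.trans (hle [] (Nat.zero_le N) 0 (Nat.zero_le 2)), hle⟩

section Scaling

variable {ε : ℝ}

lemma integral_moll (u : Vn n → ℝ) (hε : 0 < ε) : ∫ h, moll u ε h = ∫ h, u h := by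
  simp only [moll]
  rw [integral_const_mul, Measure.integral_comp_inv_smul_of_nonneg volume u hε.le]
  simp [hε.ne']

lemma absMoment_moll (j : ℕ) (u : Vn n → ℝ) (hε : 0 < ε) :
    absMoment j (moll u ε) = ε ^ j * absMoment j u := by
  have hscale (h : Vn n) : ‖h‖ ^ j * |moll u ε h| =
      ε ^ j * moll (fun h => ‖h‖ ^ j * |u h|) ε h := by
    have hεj : ε ^ j ≠ 0 := pow_ne_zero j hε.ne'
    simp only [moll, abs_mul, norm_smul, mul_pow, abs_inv, norm_inv, abs_pow, Real.norm_eq_abs,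
      abs_of_pos hε, inv_pow]
    field_simp
  simp only [absMoment, hscale]
  rw [integral_const_mul, integral_moll _ hε]

lemma integrable_one_add_norm_sq_mul_moll {u : Vn n → ℝ}
    (hu : Integrable fun h : Vn n => (1 + ‖h‖ ^ 2) * u h) (hε : ε ≠ 0) :
    Integrable fun h : Vn n => (1 + ‖h‖ ^ 2) * moll u ε h := by
  have hsplit (h : Vn n) : (1 + ‖h‖ ^ 2) * moll u ε h = (ε ^ n)⁻¹ *
      ((1 - ε ^ 2) * u (ε⁻¹ • h) + ε ^ 2 * ((1 + ‖ε⁻¹ • h‖ ^ 2) * u (ε⁻¹ • h))) := by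
    simp only [moll, norm_smul, norm_inv, mul_pow, inv_pow, Real.norm_eq_abs, sq_abs]
    field_simp
    ring
  simp only [hsplit]
  have hu' := integrable_of_integrable_one_add_norm_sq_mul hu
  exact (((hu'.const_mul (1 - ε ^ 2)).add (hu.const_mul (ε ^ 2))).comp_smul
    (inv_ne_zero hε)).const_mul _

lemma sder_const_mul (i : Fin n) (c : ℝ) (u : Vn n → ℝ) :
    sder i (fun h => c * u h) = fun h => c * sder i u h :=
  funext fun h => congrArg (fun T : Vn n → Vn n →L[ℝ] ℝ => T h (Pi.single i 1))
    (fderiv_const_smul_field (f := u) c)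

lemma sder_moll (i : Fin n) (u : Vn n → ℝ) (ε : ℝ) :
    sder i (moll u ε) = fun h => ε⁻¹ * moll (sder i u) ε h := by
  funext h
  calc sder i (moll u ε) h = (ε ^ n)⁻¹ * sder i (fun h => u (ε⁻¹ • h)) h :=
        congrFun (sder_const_mul i (ε ^ n)⁻¹ fun h => u (ε⁻¹ • h)) h
    _ = ε⁻¹ * moll (sder i u) ε h := by
        simp only [sder, moll, fderiv_comp_smul, smul_apply, smul_eq_mul]
        ring

lemma sderM_moll (b : List (Fin n)) (u : Vn n → ℝ) (ε : ℝ) :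
    sderM b (moll u ε) = fun h => ε⁻¹ ^ b.length * moll (sderM b u) ε h := by
  induction b with
  | nil => simp [sderM]
  | cons i b ih =>
    rw [sderM, ih, sder_const_mul, sder_moll]
    simp only [sderM, List.length_cons, pow_succ, mul_assoc]

protected lemma HasSecondMoments.moll {N : ℕ} {η : Vn n → ℝ} (hη : HasSecondMoments N η)
    (hε : ε ≠ 0) : HasSecondMoments N (moll η ε) where
  contDiff := contDiff_const.mul (hη.contDiff.comp (contDiff_const_smul _))
  integrable_weighted b hb := by
    simp only [sderM_moll, mul_left_comm _ (ε⁻¹ ^ b.length)]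
    exact (integrable_one_add_norm_sq_mul_moll (hη.integrable_weighted b hb) hε).const_mul _

lemma absMoment_sderM_moll (j : ℕ) (b : List (Fin n)) (η : Vn n → ℝ) (hε : 0 < ε) :
    absMoment j (sderM b (moll η ε)) = ε⁻¹ ^ b.length * ε ^ j * absMoment j (sderM b η) := by
  rw [mul_assoc, ← absMoment_moll j _ hε, sderM_moll, absMoment, absMoment, ← integral_const_mul]
  congr 1 with h
  rw [abs_mul, abs_of_nonneg (by positivity)]
  ring

end Scaling

/-! ### The commutator -/

/-- The commutator `k ∗ (f g) − (k ∗ f)(k ∗ g)` of convolution with `k` and multiplication. -/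
def convCommutator (k f g : Vn n → ℝ) : Vn n → ℝ :=
  fun y => conv k (fun z => f z * g z) y - conv k f y * conv k g y

section Commutator

variable {k f g : Vn n → ℝ}

lemma convCommutator_comm (k f g : Vn n → ℝ) : convCommutator k f g = convCommutator k g f := by
  funext y
  simp only [convCommutator, mul_comm]

lemma conv_sub {y : Vn n} (hf : Integrable fun h => k h * f (y - h))
    (hg : Integrable fun h => k h * g (y - h)) :
    conv k (fun z => f z - g z) y = conv k f y - conv k g y := by
  simp only [conv, mul_sub]
  exact integral_sub hf hg

lemma conv_const_mul (k f : Vn n → ℝ) (c : ℝ) (y : Vn n) :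
    conv k (fun z => c * f z) y = c * conv k f y := by
  simp only [conv, mul_left_comm _ c, integral_const_mul]

lemma conv_const (k : Vn n → ℝ) (c : ℝ) (y : Vn n) :
    conv k (fun _ => c) y = (∫ h, k h) * c :=
  integral_mul_const c k

lemma convCommutator_sub_const_left (hk : Integrable k) (hk1 : ∫ h, k h = 1)
    (hf : ∀ y, Integrable fun h => k h * f (y - h))
    (hg : ∀ y, Integrable fun h => k h * g (y - h))
    (hfg : ∀ y, Integrable fun h => k h * (f (y - h) * g (y - h))) (c : ℝ) :
    convCommutator k (fun z => f z - c) g = convCommutator k f g := by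
  funext y
  have hcg : Integrable fun h => k h * (c * g (y - h)) := by
    simpa only [mul_left_comm _ c] using (hg y).const_mul c
  simp only [convCommutator, sub_mul]
  rw [conv_sub (f := fun z => f z * g z) (g := fun z => c * g z) (hfg y) hcg, conv_const_mul,
    conv_sub (g := fun _ => c) (hf y) (hk.mul_const c), conv_const, hk1]
  ring

lemma convCommutator_sub_const {N : ℕ} (hk : HasSecondMoments N k) (hk1 : ∫ h, k h = 1)
    (hf : ContDiff ℝ 1 f) (hg : ContDiff ℝ 1 g) {A B : ℝ} (hA : ∀ x, ‖fderiv ℝ f x‖ ≤ A)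
    (hB : ∀ x, ‖fderiv ℝ g x‖ ≤ B) (c d : ℝ) :
    convCommutator k (fun z => f z - c) (fun z => g z - d) = convCommutator k f g := by
  have hint {u v : Vn n → ℝ} (hu : ContDiff ℝ 1 u) (hv : ContDiff ℝ 1 v) {A B : ℝ}
      (hA : ∀ x, ‖fderiv ℝ u x‖ ≤ A) (hB : ∀ x, ‖fderiv ℝ v x‖ ≤ B) (c : ℝ) :
      convCommutator k (fun z => u z - c) v = convCommutator k u v :=
    convCommutator_sub_const_left hk.integrable hk1
      (hk.integrable_mul_comp_sub (.of_norm_fderiv_le hu hA))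
      (hk.integrable_mul_comp_sub (.of_norm_fderiv_le hv hB))
      (hk.integrable_mul_comp_sub (.mul_of_norm_fderiv_le hu hv hA hB)) c
  have hB' (x : Vn n) : ‖fderiv ℝ (fun z => g z - d) x‖ ≤ B := by
    simpa only [fderiv_sub_const] using hB x
  rw [hint hf (hg.sub contDiff_const) hA hB', convCommutator_comm, hint hg hf hB hA,
    convCommutator_comm]

end Commutator

lemma HasSecondMoments.abs_sderM_convCommutator_le {k f g : Vn n → ℝ} {a : List (Fin n)}
    (hk : HasSecondMoments a.length k) {M ε : ℝ}
    (hM : ∀ b : List (Fin n), b.length ≤ a.length → ∀ j ≤ 2,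
      absMoment j (sderM b k) ≤ ε⁻¹ ^ b.length * ε ^ j * M)
    (hf : HasQuadraticGrowth f) (hg : HasQuadraticGrowth g)
    (hfg : HasQuadraticGrowth fun z => f z * g z) {A B : ℝ} (hA : 0 ≤ A) (hB : 0 ≤ B) {x : Vn n}
    (hfx : ∀ h, |f (x - h)| ≤ A * ‖h‖) (hgx : ∀ h, |g (x - h)| ≤ B * ‖h‖) :
    |sderM a (convCommutator k f g) x| ≤
      (M + 2 ^ a.length * M ^ 2) * (ε ^ 2 * ε⁻¹ ^ a.length) * A * B := by
  have hconv {u : Vn n → ℝ} (hu : HasQuadraticGrowth u) {D : ℝ} (hD : 0 ≤ D) {j : ℕ} (hj : j ≤ 2)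
      (hux : ∀ h, |u (x - h)| ≤ D * ‖h‖ ^ j) (b : List (Fin n)) (hb : b.length ≤ a.length) :
      |sderM b (conv k u) x| ≤ D * ε ^ j * M * ε⁻¹ ^ b.length := by
    rw [(hk.mono hb).sderM_conv hu]
    calc _ ≤ D * absMoment j (sderM b k) :=
          abs_conv_le_mul_absMoment (hk.integrable_norm_pow_mul_abs_sderM hb hj) hux
      _ ≤ D * (ε⁻¹ ^ b.length * ε ^ j * M) := by gcongr; exact hM b hb j hj
      _ = D * ε ^ j * M * ε⁻¹ ^ b.length := by ring
  have hfgx (h : Vn n) : |f (x - h) * g (x - h)| ≤ A * B * ‖h‖ ^ 2 := by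
    calc _ ≤ A * ‖h‖ * (B * ‖h‖) := by rw [abs_mul]; gcongr; exacts [hfx h, hgx h]
      _ = A * B * ‖h‖ ^ 2 := by ring
  have hconv_mul := hconv hfg (mul_nonneg hA hB) le_rfl hfgx a le_rfl
  have hmul_conv := abs_sderM_mul_le a (hk.contDiff_conv hf) (hk.contDiff_conv hg)
    (hconv hf hA one_le_two (by simpa using hfx)) (hconv hg hB one_le_two (by simpa using hgx))
  unfold convCommutator
  rw [sderM_sub a (hk.contDiff_conv hfg)
    ((hk.contDiff_conv hf).mul (hk.contDiff_conv hg))]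
  calc _ ≤ A * B * ε ^ 2 * M * ε⁻¹ ^ a.length +
        A * ε ^ 1 * M * (B * ε ^ 1 * M) * (2 * ε⁻¹) ^ a.length :=
        (abs_sub _ _).trans (add_le_add hconv_mul hmul_conv)
    _ = (M + 2 ^ a.length * M ^ 2) * (ε ^ 2 * ε⁻¹ ^ a.length) * A * B := by ring

theorem mollification_commutator_general {η : Vn n → ℝ} {N : ℕ} (hη : HasSecondMoments N η)
    (hnorm : ∫ h, η h = 1) :
    ∃ C : ℝ, 0 ≤ C ∧ ∀ a : List (Fin n), a.length = N → ∀ ε : ℝ, 0 < ε →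
      ∀ f g : Vn n → ℝ, ContDiff ℝ 1 f → ContDiff ℝ 1 g →
        ∀ A B : ℝ, (∀ x, ‖fderiv ℝ f x‖ ≤ A) → (∀ x, ‖fderiv ℝ g x‖ ≤ B) →
          ∀ x, |sderM a (convCommutator (moll η ε) f g) x| ≤
            C * ε ^ ((2 : ℝ) - a.length) * A * B := by
  obtain ⟨M, hM0, hM⟩ := exists_absMoment_sderM_le N η
  refine ⟨M + 2 ^ N * M ^ 2, by positivity, ?_⟩
  rintro a rfl ε hε f g hf hg A B hA hB x
  have hk : HasSecondMoments a.length (moll η ε) := hη.moll hε.ne'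
  have hk1 : ∫ h, moll η ε h = 1 := (integral_moll η hε).trans hnorm
  have hf' : ContDiff ℝ 1 fun z => f z - f x := hf.sub contDiff_const
  have hg' : ContDiff ℝ 1 fun z => g z - g x := hg.sub contDiff_const
  have hA' (y : Vn n) : ‖fderiv ℝ (fun z => f z - f x) y‖ ≤ A := by
    simpa only [fderiv_sub_const] using hA y
  have hB' (y : Vn n) : ‖fderiv ℝ (fun z => g z - g x) y‖ ≤ B := by
    simpa only [fderiv_sub_const] using hB y
  have hpow : ε ^ ((2 : ℝ) - a.length) = ε ^ 2 * ε⁻¹ ^ a.length := by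
    rw [Real.rpow_sub hε, Real.rpow_two, Real.rpow_natCast, inv_pow, div_eq_mul_inv]
  rw [hpow, ← convCommutator_sub_const hk hk1 hf hg hA hB (f x) (g x)]
  refine hk.abs_sderM_convCommutator_le (fun b hb j hj => ?_) (.of_norm_fderiv_le hf' hA')
    (.of_norm_fderiv_le hg' hB') (.mul_of_norm_fderiv_le hf' hg' hA' hB')
    ((norm_nonneg _).trans (hA 0)) ((norm_nonneg _).trans (hB 0)) (fun h => ?_) (fun h => ?_)
  · rw [absMoment_sderM_moll j b η hε]
    gcongr
    exact hM b hb j hj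
  · simpa using norm_sub_le_of_norm_fderiv_le (hf.differentiable one_ne_zero) hA x (x - h)
  · simpa using norm_sub_le_of_norm_fderiv_le (hg.differentiable one_ne_zero) hB x (x - h)

/-- **Quadratic mollification commutator estimate.** -/
theorem mollification_commutator (n : ℕ) (η : Vn n → ℝ)
    (hsm : ContDiff ℝ (⊤ : ℕ∞) η)
    (hnorm : (∫ h, η h) = 1)
    (hint : ∀ b : List (Fin n), Integrable fun h : Vn n => (1 + ‖h‖ ^ 2) * sderM b η h) :
    ∀ a : List (Fin n), ∃ C : ℝ, 0 ≤ C ∧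
      ∀ ε : ℝ, 0 < ε →
        ∀ f g : Vn n → ℝ, ContDiff ℝ 1 f → ContDiff ℝ 1 g →
          (∃ Mf, ∀ x, |f x| ≤ Mf) → (∃ Mg, ∀ x, |g x| ≤ Mg) →
          ∀ A B : ℝ, (∀ x, ‖fderiv ℝ f x‖ ≤ A) → (∀ x, ‖fderiv ℝ g x‖ ≤ B) →
            ∀ x, |sderM a (fun y =>
                conv (moll η ε) (fun z => f z * g z) y -
                  conv (moll η ε) f y * conv (moll η ε) g y) x| ≤
              C * ε ^ ((2 : ℝ) - a.length) * A * B := by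
  intro a
  obtain ⟨C, hC, hbound⟩ := mollification_commutator_general (N := a.length)
    ⟨hsm.of_le (by exact_mod_cast le_top), fun b _ => hint b⟩ hnorm
  exact ⟨C, hC, fun ε hε f g hf hg _ _ => hbound a rfl ε hε f g hf hg⟩

end
end

section
/- (Disjoint pipe neighborhoods.) Let F = {e_i + e_j : 1 ≤ i < j ≤ 3} ∪ {e_i − e_j : 1 ≤ i < j ≤ 3} ⊆ ℤ³. There exist points (p_f)_{f∈F} in 𝕋³ and a number r₀ > 0 such that, denoting by ℓ_f = {p_f + t f : t ∈ ℝ} ⊆ 𝕋³ the periodization of the line through p_f in direction f and by N_δ(ℓ_f) its closed δ-neighborhood in 𝕋³, the sets N_{3r₀}(ℓ_f), f ∈ F, are pairwise disjoint. -/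
/-!
An integer vector `n` orthogonal to `f` makes `y ↦ n · y` constant modulo `1` on each periodized
line in direction `f`. Any two directions in `ℤ³` have a common nonzero normal `n` in `ℤ³`, so two
such lines through `p` and `p'` have disjoint neighborhoods as soon as `n · (p - p')` is not an
integer. Taking all base points to be distinct integer multiples of `(θ, θ², θ³)` with `θ`
transcendental achieves this for all pairs at once, since `n · (p - p')` is then a nonconstant
integer polynomial in `θ`.
-/

noncomputable section

abbrev V3 : Type := Fin 3 → ℝ

/-- the `i`-th standard basis vector of `ℝ³` -/
def stdv (i : Fin 3) : V3 := Pi.single i 1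

/-- the six directions `e_i ± e_j`, `1 ≤ i < j ≤ 3` -/
def Fdirs : Set V3 :=
  {g | ∃ i j : Fin 3, i < j ∧ (g = stdv i + stdv j ∨ g = stdv i - stdv j)}

/-- the periodization of the line through `p` in direction `f`, viewed as the
`ℤ³`-saturated subset of `ℝ³` representing a subset of `𝕋³` -/
def pipeLine (p f : V3) : Set V3 :=
  {y | ∃ (t : ℝ) (ℓ : Fin 3 → ℤ), y = p + t • f + fun i => (ℓ i : ℝ)}

/-- the closed `δ`-neighborhood of a set -/
def nbhdOf (A : Set V3) (δ : ℝ) : Set V3 := {z | ∃ y ∈ A, ‖z - y‖ ≤ δ}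

open Filter Matrix Polynomial Topology
open scoped Pointwise

lemma exists_ne_zero_mulVec_eq_zero_of_card_lt {R κ ι : Type*} [CommRing R] [Nontrivial R]
    [Fintype κ] [Fintype ι] (A : Matrix κ ι R) (h : Fintype.card κ < Fintype.card ι) :
    ∃ n ≠ 0, A *ᵥ n = 0 := by
  by_contra! hA
  have hinj : Function.Injective A.mulVecLin :=
    (injective_iff_map_eq_zero _).2 fun n hn => by_contra fun hn₀ => hA n hn₀ hn
  exact h.not_ge (card_le_of_injective R A.mulVecLin hinj)

lemma exists_ne_zero_dotProduct_eq_zero_and_dotProduct_eq_zero {R ι : Type*} [CommRing R]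
    [Nontrivial R] [Fintype ι] (hι : 2 < Fintype.card ι) (a b : ι → R) :
    ∃ n ≠ 0, n ⬝ᵥ a = 0 ∧ n ⬝ᵥ b = 0 := by
  obtain ⟨n, hn, h⟩ := exists_ne_zero_mulVec_eq_zero_of_card_lt (of ![a, b]) (by simpa)
  refine ⟨n, hn, ?_, ?_⟩
  · rw [dotProduct_comm]; exact congrFun h 0
  · rw [dotProduct_comm]; exact congrFun h 1

lemma dotProduct_pow_succ_ne_algebraMap {R A : Type*} [CommRing R] [Ring A] [Algebra R A]
    {θ : A} (hθ : Transcendental R θ) {d : ℕ} {n : Fin d → R} (hn : n ≠ 0) (m : R) :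
    (algebraMap R A ∘ n) ⬝ᵥ (fun i => θ ^ (i.val + 1)) ≠ algebraMap R A m := by
  intro h
  set P : R[X] := ∑ i, C (n i) * X ^ (i.val + 1) - C m with hP
  have hroot : aeval θ P = 0 := by
    simpa [hP, dotProduct, sub_eq_zero] using h
  have hP₀ : P = 0 := transcendental_iff.1 hθ P hroot
  refine hn (funext fun i => ?_)
  have hcoeff : P.coeff (i.val + 1) = n i := by
    simp [hP, coeff_X_pow, Fin.val_inj]
  simpa [hP₀] using hcoeff.symm

lemma exists_forall_dotProduct_ne_intCast (d : ℕ) :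
    ∃ v : Fin d → ℝ, ∀ n : Fin d → ℤ, n ≠ 0 → ∀ m : ℤ, ((↑) ∘ n) ⬝ᵥ v ≠ m :=
  ⟨_, fun _ hn => dotProduct_pow_succ_ne_algebraMap (transcendental_liouvilleNumber le_rfl) hn⟩

lemma dotProduct_sub_mem_range_intCast_of_mem_pipeLine {n : Fin 3 → ℤ} {p f y : V3}
    (hn : ((↑) ∘ n) ⬝ᵥ f = 0) (hy : y ∈ pipeLine p f) :
    ((↑) ∘ n) ⬝ᵥ (y - p) ∈ Set.range ((↑) : ℤ → ℝ) := by
  obtain ⟨t, l, rfl⟩ := hy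
  refine ⟨n ⬝ᵥ l, ?_⟩
  rw [add_assoc, add_sub_cancel_left, dotProduct_add, dotProduct_smul, hn, smul_zero, zero_add]
  exact (Int.castRingHom ℝ).map_dotProduct n l

lemma zero_notMem_closure_pipeLine_sub_pipeLine {n : Fin 3 → ℤ} {p p' f f' : V3}
    (hf : ((↑) ∘ n) ⬝ᵥ f = 0) (hf' : ((↑) ∘ n) ⬝ᵥ f' = 0)
    (hp : ((↑) ∘ n) ⬝ᵥ (p - p') ∉ Set.range ((↑) : ℤ → ℝ)) :
    0 ∉ closure (pipeLine p f - pipeLine p' f') := by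
  let C : Set V3 := {w | ((↑) ∘ n) ⬝ᵥ (p - p' - w) ∈ Set.range ((↑) : ℤ → ℝ)}
  have hC : IsClosed C :=
    Real.isClosed_range_intCast.preimage
      (continuous_const.dotProduct (continuous_const.sub continuous_id))
  have hsub : pipeLine p f - pipeLine p' f' ⊆ C := by
    rintro _ ⟨y, hy, y', hy', rfl⟩
    obtain ⟨k, hk⟩ := dotProduct_sub_mem_range_intCast_of_mem_pipeLine hf hy
    obtain ⟨k', hk'⟩ := dotProduct_sub_mem_range_intCast_of_mem_pipeLine hf' hy'
    refine ⟨k' - k, ?_⟩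
    simp only [Int.cast_sub, hk, hk', ← dotProduct_sub]
    congr 1
    abel
  exact fun h₀ => hp (by simpa [C] using closure_minimal hsub hC h₀)

lemma eventually_disjoint_nbhdOf {A B : Set V3} (h : 0 ∉ closure (A - B)) :
    ∀ᶠ δ in 𝓝 0, Disjoint (nbhdOf A δ) (nbhdOf B δ) := by
  obtain ⟨ε, hε, hAB⟩ : ∃ ε > 0, ∀ w ∈ A - B, ε ≤ ‖w‖ := by
    simpa [Metric.mem_closure_iff] using h
  filter_upwards [eventually_lt_nhds (half_pos hε)] with δ hδ
  refine Set.disjoint_left.2 ?_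
  rintro z ⟨y, hy, hzy⟩ ⟨y', hy', hzy'⟩
  have hle : ‖y - y'‖ ≤ ‖z - y‖ + ‖z - y'‖ := by
    simpa only [norm_sub_rev z y] using norm_sub_le_norm_sub_add_norm_sub y z y'
  linarith [hAB _ (Set.sub_mem_sub hy hy')]

lemma exists_forall_zero_notMem_closure_pipeLine_sub_pipeLine {S : Set V3} (hS : S.Countable)
    (hint : S ⊆ Set.range fun a : Fin 3 → ℤ => ((↑) ∘ a : V3)) :
    ∃ p : V3 → V3, ∀ f ∈ S, ∀ f' ∈ S, f ≠ f' →
      0 ∉ closure (pipeLine (p f) f - pipeLine (p f') f') := by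
  obtain ⟨k, hk⟩ := Set.countable_iff_exists_injOn.1 hS
  obtain ⟨v, hv⟩ := exists_forall_dotProduct_ne_intCast 3
  refine ⟨fun f => (k f : ℝ) • v, fun f hf f' hf' hne => ?_⟩
  obtain ⟨a, rfl⟩ := hint hf
  obtain ⟨b, rfl⟩ := hint hf'
  obtain ⟨n, hn, hna, hnb⟩ :=
    exists_ne_zero_dotProduct_eq_zero_and_dotProduct_eq_zero (by simp) a b
  have cast_eq_zero {w : Fin 3 → ℤ} (hw : n ⬝ᵥ w = 0) : ((↑) ∘ n : V3) ⬝ᵥ ((↑) ∘ w) = 0 := by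
    simpa [hw] using ((Int.castRingHom ℝ).map_dotProduct n w).symm
  refine zero_notMem_closure_pipeLine_sub_pipeLine (cast_eq_zero hna) (cast_eq_zero hnb) ?_
  rintro ⟨m, hm⟩
  set c : ℤ := k ((↑) ∘ a) - k ((↑) ∘ b) with hc
  have hc₀ : c ≠ 0 := sub_ne_zero.2 (Nat.cast_injective.ne (hk.ne hf hf' hne))
  refine hv (c • n) (smul_ne_zero hc₀ hn) m ?_
  calc ((↑) ∘ (c • n)) ⬝ᵥ v
      = ((c : ℝ) • ((↑) ∘ n)) ⬝ᵥ v := by congr 1; ext; simp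
    _ = ((↑) ∘ n) ⬝ᵥ ((k ((↑) ∘ a) : ℝ) • v - (k ((↑) ∘ b) : ℝ) • v) := by
      rw [smul_dotProduct, ← dotProduct_smul, ← sub_smul, hc]; norm_cast
    _ = m := hm.symm

theorem disjoint_pipe_neighborhoods_general {S : Set V3} (hS : S.Finite)
    (hint : S ⊆ Set.range fun a : Fin 3 → ℤ => ((↑) ∘ a : V3)) :
    ∃ (p : V3 → V3) (r₀ : ℝ), 0 < r₀ ∧
      ∀ f ∈ S, ∀ f' ∈ S, f ≠ f' →
        Disjoint (nbhdOf (pipeLine (p f) f) (3 * r₀))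
          (nbhdOf (pipeLine (p f') f') (3 * r₀)) := by
  obtain ⟨p, hp⟩ := exists_forall_zero_notMem_closure_pipeLine_sub_pipeLine hS.countable hint
  have hev : ∀ᶠ δ in 𝓝 (0 : ℝ), ∀ f ∈ S, ∀ f' ∈ S, f ≠ f' →
      Disjoint (nbhdOf (pipeLine (p f) f) δ) (nbhdOf (pipeLine (p f') f') δ) := by
    simp only [eventually_all_finite hS, eventually_imp_distrib_left]
    exact fun f hf f' hf' hne => eventually_disjoint_nbhdOf (hp f hf f' hf' hne)
  obtain ⟨δ, hδ, hdisj⟩ := hev.exists_gt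
  refine ⟨p, δ / 3, by positivity, ?_⟩
  rwa [mul_div_cancel₀ δ three_ne_zero]

lemma finite_Fdirs : Fdirs.Finite := by
  have hsub : Fdirs ⊆ (Set.range fun q : Fin 3 × Fin 3 => stdv q.1 + stdv q.2) ∪
      Set.range fun q : Fin 3 × Fin 3 => stdv q.1 - stdv q.2 := by
    rintro _ ⟨i, j, -, rfl | rfl⟩
    · exact Or.inl ⟨(i, j), rfl⟩
    · exact Or.inr ⟨(i, j), rfl⟩
  exact ((Set.finite_range _).union (Set.finite_range _)).subset hsub

lemma Fdirs_subset_range_intCast :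
    Fdirs ⊆ Set.range fun a : Fin 3 → ℤ => ((↑) ∘ a : V3) := by
  rintro _ ⟨i, j, -, rfl | rfl⟩
  · exact ⟨Pi.single i 1 + Pi.single j 1, by ext; simp [stdv, Pi.single_apply]⟩
  · exact ⟨Pi.single i 1 - Pi.single j 1, by ext; simp [stdv, Pi.single_apply]⟩

/-- **Disjoint pipe neighborhoods**: one can place the six periodized lines with
directions in `F` so that their `3r₀`-neighborhoods are pairwise disjoint. -/
theorem disjoint_pipe_neighborhoods :
    ∃ (p : V3 → V3) (r₀ : ℝ), 0 < r₀ ∧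
      ∀ f ∈ Fdirs, ∀ f' ∈ Fdirs, f ≠ f' →
        Disjoint (nbhdOf (pipeLine (p f) f) (3 * r₀))
          (nbhdOf (pipeLine (p f') f') (3 * r₀)) :=
  disjoint_pipe_neighborhoods_general finite_Fdirs Fdirs_subset_range_intCast

end
end
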